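/- arXiv:2106.00807 — 6 statements merged into one kernel-verified Lean document; each statement's English description precedes it below -/
import Mathlib

section
/- Let A be a finite distributive nearlattice. Then the set B(A) of boolean elements is a nearlattice subalgebra of A: 1 ∈ B(A); if a, b ∈ B(A) then a ∨ b ∈ B(A); and if a, b ∈ B(A) and the meet a ∧ b exists in A, then a ∧ b ∈ B(A). -/
/-- In a join-semilattice, any two elements with a common lower bound have a
greatest lower bound. -/
def HasPartialMeets (A : Type*) [SemilatticeSup A] : Prop :=
  ∀ x y : A, (∃ z, z ≤ x ∧ z ≤ y) → ∃ m, IsGLB ({x, y} : Set A) m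

/-- Every principal upset is distributive. -/
def UpsetDistrib (A : Type*) [SemilatticeSup A] : Prop :=
  ∀ a x y z m₁ m₂ m₃ : A, a ≤ x → a ≤ y → a ≤ z →
    IsGLB ({x, y ⊔ z} : Set A) m₁ → IsGLB ({x, y} : Set A) m₂ →
    IsGLB ({x, z} : Set A) m₃ → m₁ = m₂ ⊔ m₃

/-- A boolean element: the principal upset `[a)` is a boolean lattice. -/
def BooleanElt {A : Type*} [SemilatticeSup A] [OrderTop A] (a : A) : Prop :=
  ∀ x, a ≤ x → ∃ y, a ≤ y ∧ x ⊔ y = ⊤ ∧ IsGLB ({x, y} : Set A) a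

/-!
In a distributive nearlattice the boolean elements form a filter. If `y` complements `x` in `[a)`
and `a ≤ b ≤ x`, then `y ⊔ b` complements `x` in `[b)`, by the modular law. If `a` and `b` are
boolean with meet `m` and `m ≤ x`, complement `x ⊔ a` in `[a)` by `p` and `x ⊔ b` in `[b)` by `q`;
then `p ⊓ q` complements `x` in `[m)`.
-/

section Preorder

variable {A : Type*} [Preorder A] {x y m : A}

theorem isGLB_pair_iff : IsGLB ({x, y} : Set A) m ↔ ∀ z, z ≤ m ↔ z ≤ x ∧ z ≤ y := by
  simp only [isGLB_iff_le_iff, lowerBounds_insert, lowerBounds_singleton, Set.mem_inter_iff,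
    Set.mem_Iic]

theorem isGLB_pair_of_le (h : x ≤ y) : IsGLB ({x, y} : Set A) x :=
  isGLB_pair_iff.2 fun _ => ⟨fun hz => ⟨hz, hz.trans h⟩, And.left⟩

theorem isGLB_pair_of_ge (h : y ≤ x) : IsGLB ({x, y} : Set A) y :=
  Set.pair_comm y x ▸ isGLB_pair_of_le h

end Preorder

section Nearlattice

variable {A : Type*} [SemilatticeSup A]

namespace UpsetDistrib

variable {a b c x y p q m : A}

theorem isGLB_sup_of_isGLB (hd : UpsetDistrib A) (h : IsGLB ({x, y} : Set A) a)
    (hab : a ≤ b) (hbx : b ≤ x) : IsGLB ({x, y ⊔ b} : Set A) b := by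
  have le_and_le := isGLB_pair_iff.1 h
  refine isGLB_pair_iff.2 fun z => ⟨fun hz => ⟨hz.trans hbx, le_sup_of_le_right hz⟩, ?_⟩
  rintro ⟨hzx, hzyb⟩
  -- A lower bound `z` need not lie in an upset where distributivity applies, but `z ⊔ b` does.
  have hazb : a ≤ z ⊔ b := le_sup_of_le_right hab
  have meet_yb : IsGLB ({z ⊔ b, y ⊔ b} : Set A) (z ⊔ b) :=
    isGLB_pair_of_le (sup_le hzyb le_sup_right)
  have meet_y : IsGLB ({z ⊔ b, y} : Set A) a := isGLB_pair_iff.2 fun w =>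
    ⟨fun hw => ⟨hw.trans hazb, ((le_and_le w).1 hw).2⟩,
      fun hw => (le_and_le w).2 ⟨hw.1.trans (sup_le hzx hbx), hw.2⟩⟩
  have meet_b : IsGLB ({z ⊔ b, b} : Set A) b := isGLB_pair_of_ge le_sup_right
  calc
    z ≤ z ⊔ b := le_sup_left
    _ = a ⊔ b := hd a _ y b _ a b hazb ((le_and_le a).1 le_rfl).2 hab meet_yb meet_y meet_b
    _ = b := sup_eq_right.2 hab

theorem le_sup_of_isGLB (hd : UpsetDistrib A) (hm : HasPartialMeets A)
    (h : IsGLB ({p, q} : Set A) m) (hcx : c ≤ x) (hcm : c ≤ m) (hp : p ≤ x ⊔ q) :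
    p ≤ x ⊔ m := by
  obtain ⟨hcp, hcq⟩ := (isGLB_pair_iff.1 h c).1 hcm
  obtain ⟨r, hr⟩ := hm p x ⟨c, hcp, hcx⟩
  have hrx : r ≤ x := ((isGLB_pair_iff.1 hr r).1 le_rfl).2
  calc
    p = r ⊔ m := hd c p x q p r m hcp hcx hcq (isGLB_pair_of_le hp) hr h
    _ ≤ x ⊔ m := sup_le_sup_right hrx m

end UpsetDistrib

variable [OrderTop A] {a b m : A}

theorem booleanElt_top : BooleanElt (⊤ : A) :=
  fun _ hx => ⟨⊤, le_rfl, sup_top_eq _, isGLB_pair_of_ge hx⟩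

namespace BooleanElt

theorem of_le (hd : UpsetDistrib A) (ha : BooleanElt a) (hab : a ≤ b) : BooleanElt b := by
  intro x hbx
  obtain ⟨y, -, hxy, hglb⟩ := ha x (hab.trans hbx)
  exact ⟨y ⊔ b, le_sup_right, by rw [← sup_assoc, hxy, top_sup_eq],
    hd.isGLB_sup_of_isGLB hglb hab hbx⟩

theorem exists_sup_eq_top (ha : BooleanElt a) (x : A) :
    ∃ p, a ≤ p ∧ x ⊔ p = ⊤ ∧ ∀ z, z ≤ x → z ≤ p → z ≤ a := by
  obtain ⟨p, hap, htop, hglb⟩ := ha (x ⊔ a) le_sup_right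
  refine ⟨p, hap, ?_, fun z hzx hzp => (isGLB_pair_iff.1 hglb z).2 ⟨le_sup_of_le_left hzx, hzp⟩⟩
  rwa [sup_assoc, sup_eq_right.2 hap] at htop

theorem of_isGLB (hm : HasPartialMeets A) (hd : UpsetDistrib A) (ha : BooleanElt a)
    (hb : BooleanElt b) (hab : IsGLB ({a, b} : Set A) m) : BooleanElt m := by
  intro x hmx
  have le_m := isGLB_pair_iff.1 hab
  obtain ⟨hma, hmb⟩ := (le_m m).1 le_rfl
  obtain ⟨p, hap, hxp, hp⟩ := ha.exists_sup_eq_top x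
  obtain ⟨q, hbq, hxq, hq⟩ := hb.exists_sup_eq_top x
  obtain ⟨y, hy⟩ := hm p q ⟨m, hma.trans hap, hmb.trans hbq⟩
  have le_y := isGLB_pair_iff.1 hy
  have hmy : m ≤ y := (le_y m).2 ⟨hma.trans hap, hmb.trans hbq⟩
  have hpxy : p ≤ x ⊔ y := hd.le_sup_of_isGLB hm hy hmx hmy (hxq ▸ le_top)
  refine ⟨y, hmy, top_le_iff.1 (hxp ▸ sup_le le_sup_left hpxy), isGLB_pair_iff.2 fun z => ?_⟩
  refine ⟨fun hz => ⟨hz.trans hmx, hz.trans hmy⟩, fun ⟨hzx, hzy⟩ => ?_⟩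
  obtain ⟨hzp, hzq⟩ := (le_y z).1 hzy
  exact (le_m z).2 ⟨hp z hzx hzp, hq z hzx hzq⟩

end BooleanElt

end Nearlattice

theorem boolean_elements_subalgebra_general {A : Type*} [SemilatticeSup A] [OrderTop A]
    (hm : HasPartialMeets A) (hd : UpsetDistrib A) :
    BooleanElt (⊤ : A) ∧
      IsUpperSet {a : A | BooleanElt a} ∧
      (∀ a b m : A, BooleanElt a → BooleanElt b →
        IsGLB ({a, b} : Set A) m → BooleanElt m) :=
  ⟨booleanElt_top, fun _ _ hab ha => ha.of_le hd hab,
    fun _ _ _ ha hb hab => ha.of_isGLB hm hd hb hab⟩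

/-- in a finite distributive nearlattice, the boolean elements form
a nearlattice subalgebra: they contain `1`, are closed under `∨`, and closed
under existing meets. -/
theorem boolean_elements_subalgebra {A : Type*} [SemilatticeSup A] [OrderTop A]
    [Finite A] (hm : HasPartialMeets A) (hd : UpsetDistrib A) :
    BooleanElt (⊤ : A) ∧
      (∀ a b : A, BooleanElt a → BooleanElt b → BooleanElt (a ⊔ b)) ∧
      (∀ a b m : A, BooleanElt a → BooleanElt b →
        IsGLB ({a, b} : Set A) m → BooleanElt m) :=
  have ⟨htop, hupper, hmeet⟩ := boolean_elements_subalgebra_general hm hd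
  ⟨htop, fun _ _ ha _ => hupper le_sup_left ha, hmeet⟩
end

section
/- Let A be a finite distributive nearlattice, let a be a boolean element of A and let b ∈ A with a ≤ b. Then b is a boolean element of A; that is, B(A) is an upset of A and [a) ∩ B(A) = [a). -/
/-!
If `y` is a complement of `x` in `[a)` and `a ≤ b ≤ x`, then `y ⊔ b` is a complement of `x` in
`[b)`: by the modular law the meet of `x` and `y ⊔ b` is `a ⊔ b = b`. To see that this meet exists,
let `w` be a common lower bound of `x` and `y ⊔ b`. Then `w ⊔ b` is another one and meets `y ⊔ b` in
itself, so the modular law for `w ⊔ b`, `y` and `b` gives `w ⊔ b = a ⊔ b = b`, that is, `w ≤ b`.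
-/

/-- The modular law in every principal upset `[a)`. Like `UpsetDistrib`, it constrains only those
meets that exist, so it makes sense in any join-semilattice. Without distributivity, `BooleanElt a`
says that `[a)` is complemented. -/
def UpsetModular (A : Type*) [SemilatticeSup A] : Prop :=
  ∀ a x y z m n : A, a ≤ y → a ≤ z → z ≤ x →
    IsGLB ({x, y ⊔ z} : Set A) m → IsGLB ({x, y} : Set A) n → m = n ⊔ z

theorem isGLB_pair_of_le_s3 {α : Type*} [Preorder α] {x y : α} (hxy : x ≤ y) :
    IsGLB ({x, y} : Set α) x :=
  IsLeast.isGLB ⟨Set.mem_insert x {y}, by simpa [lowerBounds_insert] using hxy⟩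

theorem isGLB_pair_of_le_of_le {α : Type*} [Preorder α] {m w x y : α}
    (hm : IsGLB ({x, y} : Set α) m) (hmw : m ≤ w) (hwx : w ≤ x) :
    IsGLB ({w, y} : Set α) m := by
  simp only [IsGLB, IsGreatest, mem_upperBounds, lowerBounds_insert, lowerBounds_singleton,
    Set.mem_inter_iff, Set.mem_Iic] at hm ⊢
  exact ⟨⟨hmw, hm.1.2⟩, fun v hv ↦ hm.2 v ⟨hv.1.trans hwx, hv.2⟩⟩

theorem UpsetDistrib.upsetModular {A : Type*} [SemilatticeSup A] (hd : UpsetDistrib A) :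
    UpsetModular A := by
  intro a x y z m n hay haz hzx hm hn
  have hz : IsGLB ({x, z} : Set A) z := Set.pair_comm z x ▸ isGLB_pair_of_le_s3 hzx
  exact hd a x y z m n z (haz.trans hzx) hay haz hm hn hz

theorem UpsetModular.isGLB_pair_sup {A : Type*} [SemilatticeSup A] (hmod : UpsetModular A)
    {a b x y : A} (ha : IsGLB ({x, y} : Set A) a) (hab : a ≤ b) (hbx : b ≤ x) :
    IsGLB ({x, y ⊔ b} : Set A) b := by
  have hay : a ≤ y := ha.1 (Set.mem_insert_of_mem x rfl)
  refine ⟨?_, fun w hw ↦ ?_⟩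
  · simp [lowerBounds_insert, hbx]
  · obtain ⟨hwx, hwy⟩ : w ≤ x ∧ w ≤ y ⊔ b := by simpa [lowerBounds_insert] using hw
    have hmeet : IsGLB ({w ⊔ b, y ⊔ b} : Set A) (w ⊔ b) :=
      isGLB_pair_of_le_s3 (sup_le hwy le_sup_right)
    have ha' : IsGLB ({w ⊔ b, y} : Set A) a :=
      isGLB_pair_of_le_of_le ha (hab.trans le_sup_right) (sup_le hwx hbx)
    calc
      w ≤ w ⊔ b := le_sup_left
      _ = a ⊔ b := hmod a (w ⊔ b) y b (w ⊔ b) a hay hab le_sup_right hmeet ha'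
      _ = b := sup_eq_right.mpr hab

theorem boolean_elements_upset_general {A : Type*} [SemilatticeSup A] [OrderTop A]
    (hmod : UpsetModular A) (a b : A) (ha : BooleanElt a) (hab : a ≤ b) :
    BooleanElt b := by
  intro x hbx
  obtain ⟨y, -, hxy, hmeet⟩ := ha x (hab.trans hbx)
  have hjoin : x ⊔ (y ⊔ b) = ⊤ := by rw [← sup_assoc, hxy, top_sup_eq]
  exact ⟨y ⊔ b, le_sup_right, hjoin, hmod.isGLB_pair_sup hmeet hab hbx⟩

/-- in a finite distributive nearlattice, everything above a
boolean element is boolean (the set of boolean elements is an upset). -/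
theorem boolean_elements_upset {A : Type*} [SemilatticeSup A] [OrderTop A]
    [Finite A] (hm : HasPartialMeets A) (hd : UpsetDistrib A)
    (a b : A) (ha : BooleanElt a) (hab : a ≤ b) :
    BooleanElt b :=
  boolean_elements_upset_general hd.upsetModular a b ha hab
end

section
/- Let A be a finite distributive nearlattice. (1) For all boolean elements a, b ∈ B(A): a ≤ b if and only if a^⊤ ⊆ b^⊤. (2) For every a ∈ A, the set X_a has a greatest lower bound b = ⋀X_a in A (interpreting ⋀∅ = 1), and a^⊤ = b^⊤. -/
/-- A dual atom: `a ≠ 1` and `a ≤ x ≤ 1` implies `x = a` or `x = 1`. -/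
def DualAtom {A : Type*} [SemilatticeSup A] [OrderTop A] (a : A) : Prop :=
  a ≠ ⊤ ∧ ∀ x, a ≤ x → x = a ∨ x = ⊤

/-- `X_a`: the set of dual atoms above `a`. -/
def Xset {A : Type*} [SemilatticeSup A] [OrderTop A] (a : A) : Set A :=
  {x | DualAtom x ∧ a ≤ x}

/-- `a^⊤ = {x : a ∨ x = 1}`. -/
def topOf {A : Type*} [SemilatticeSup A] [OrderTop A] (a : A) : Set A :=
  {x | a ⊔ x = ⊤}

/-!
The dual atoms above `a ⊔ x` are those above both `a` and `x`, and in a coatomic order `⊤` is the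
only element below no dual atom. Hence `x ∈ topOf a` exactly when `Xset a` and `Xset x` are
disjoint, so `topOf a` depends only on `Xset a`; and a greatest lower bound of `Xset a` has the
same dual atoms above it as `a`.

For the comparison of annihilators, a complement `y` of `a ⊔ b` in the upset of a boolean
element `b` lies in `topOf a`. If it also lies in `topOf b`, then `y = ⊤`, which forces
`a ⊔ b = b`.
-/

theorem exists_isGLB_of_bddBelow {α : Type*} [SemilatticeSup α] [WellFoundedGT α] {s : Set α}
    (hs : BddBelow s) : ∃ b, IsGLB s b := by
  obtain ⟨m, hm⟩ := exists_maximal_of_wellFoundedGT (· ∈ lowerBounds s) hs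
  refine ⟨m, hm.prop, fun z hz => ?_⟩
  have sup_mem : m ⊔ z ∈ lowerBounds s := fun x hx => sup_le (hm.prop hx) (hz hx)
  exact le_sup_right.trans (hm.le_of_ge sup_mem le_sup_left)

section

variable {A : Type*} [SemilatticeSup A] [OrderTop A] {a b x : A}

theorem dualAtom_iff_isCoatom : DualAtom a ↔ IsCoatom a := by
  refine and_congr_right fun _ => forall_congr' fun x => ?_
  rw [le_iff_eq_or_lt, eq_comm (a := x)]
  exact ⟨fun h hax => (h (.inr hax)).resolve_left hax.ne, fun h => Or.imp_right h⟩

theorem Xset_sup : Xset (a ⊔ b) = Xset a ∩ Xset b := by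
  ext c
  exact (and_congr_right fun _ => sup_le_iff).trans and_and_left

theorem Xset_eq_empty_iff [IsCoatomic A] : Xset a = ∅ ↔ a = ⊤ := by
  rw [Set.eq_empty_iff_forall_notMem]
  constructor
  · intro hempty
    refine (eq_top_or_exists_le_coatom a).resolve_right ?_
    rintro ⟨c, hc, hac⟩
    exact hempty c ⟨dualAtom_iff_isCoatom.mpr hc, hac⟩
  · rintro rfl c ⟨hc, htop⟩
    exact hc.1 (top_le_iff.mp htop)

theorem mem_topOf_iff_disjoint_Xset [IsCoatomic A] :
    x ∈ topOf a ↔ Disjoint (Xset a) (Xset x) := by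
  rw [Set.disjoint_iff_inter_eq_empty, ← Xset_sup, Xset_eq_empty_iff]
  rfl

theorem topOf_eq_of_Xset_eq [IsCoatomic A] (h : Xset a = Xset b) : topOf a = topOf b := by
  ext x
  rw [mem_topOf_iff_disjoint_Xset, mem_topOf_iff_disjoint_Xset, h]

theorem Xset_eq_of_isGLB_Xset (hb : IsGLB (Xset a) b) : Xset a = Xset b := by
  have hab : a ≤ b := hb.2 fun _ hc => hc.2
  ext c
  exact ⟨fun hc => ⟨hc.1, hb.1 hc⟩, fun hc => ⟨hc.1, hab.trans hc.2⟩⟩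

theorem topOf_mono : Monotone (topOf : A → Set A) := fun _ _ hab _ hx =>
  (Codisjoint.mono_left hab (codisjoint_iff.mpr hx)).eq_top

theorem BooleanElt.le_of_topOf_subset (hb : BooleanElt b) (h : topOf a ⊆ topOf b) : a ≤ b := by
  obtain ⟨y, hby, hsup, hglb⟩ := hb (a ⊔ b) le_sup_right
  have mem_topOf_a : a ⊔ y = ⊤ := by rwa [sup_assoc, sup_eq_right.mpr hby] at hsup
  have y_eq_top : y = ⊤ := (sup_eq_right.mpr hby).symm.trans (h mem_topOf_a)
  have sup_mem : a ⊔ b ∈ lowerBounds {a ⊔ b, y} := by simp [y_eq_top]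
  exact le_sup_left.trans (hglb.2 sup_mem)

theorem BooleanElt.le_iff_topOf_subset (hb : BooleanElt b) : a ≤ b ↔ topOf a ⊆ topOf b :=
  ⟨fun hab => topOf_mono hab, hb.le_of_topOf_subset⟩

end

theorem annihilator_properties_general {A : Type*} [SemilatticeSup A] [OrderTop A]
    [WellFoundedGT A] :
    (∀ a b : A, BooleanElt b → (a ≤ b ↔ topOf a ⊆ topOf b)) ∧
      (∀ a : A, ∃ b : A, IsGLB (Xset a) b ∧ topOf a = topOf b) := by
  refine ⟨fun a b hb => hb.le_iff_topOf_subset, fun a => ?_⟩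
  obtain ⟨b, hb⟩ := exists_isGLB_of_bddBelow (s := Xset a) ⟨a, fun _ hc => hc.2⟩
  exact ⟨b, hb, topOf_eq_of_Xset_eq (Xset_eq_of_isGLB_Xset hb)⟩

/-- in a finite distributive nearlattice: (1) for boolean `a, b`,
`a ≤ b` iff `a^⊤ ⊆ b^⊤`; (2) for every `a`, the set `X_a` has a greatest lower
bound `b` and `a^⊤ = b^⊤`. -/
theorem annihilator_properties {A : Type*} [SemilatticeSup A] [OrderTop A]
    [Finite A] (hm : HasPartialMeets A) (hd : UpsetDistrib A) :
    (∀ a b : A, BooleanElt a → BooleanElt b → (a ≤ b ↔ topOf a ⊆ topOf b)) ∧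
      (∀ a : A, ∃ b : A, IsGLB (Xset a) b ∧ topOf a = topOf b) :=
  ⟨fun a b _ hb => annihilator_properties_general.1 a b hb, annihilator_properties_general.2⟩
end

section
/- Let A be a distributive nearlattice and let a, b ∈ C(A) with a ≤ b. Then there exists y ∈ C(A) with a ≤ y, b ∨ y = 1 and b ∧ y = a (y is a complement of b in the interval [a) ∩ C(A)). Consequently every principal upset of C(A) is a boolean lattice, i.e., ⟨C(A), ∨, 1⟩ is a semi-boolean algebra. -/
/-- A complemented element: the filter generated by `[a) ∪ a^⊤` is all of `A`. -/
def ComplElt {A : Type*} [SemilatticeSup A] [OrderTop A] (a : A) : Prop :=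
  ∀ x : A, ∃ u v m : A, a ≤ u ∧ a ⊔ v = ⊤ ∧ IsGLB ({u, v} : Set A) m ∧ m ≤ x

/-! For every `c`, joining with `c` maps `A` into the bounded distributive lattice `[c)` and
preserves all existing meets. Hence an element `b` is complemented exactly when `c ⊔ b` has a
complement in `[c)` for every `c`. Taking `c = a` gives a complement `y` of `b` in `[a)`. For
arbitrary `c`, the element `c ⊔ a = (c ⊔ b) ⊓ (c ⊔ y)` has a complement `w` in `[c)` because `a` is
complemented, and then `(c ⊔ b) ⊓ w` is a complement of `c ⊔ y`; so `y` is complemented. -/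

theorem isCompl_inf_of_isCompl_inf {α : Type*} [DistribLattice α] [BoundedOrder α] {p q w : α}
    (hw : IsCompl (p ⊓ q) w) (hpq : Codisjoint p q) : IsCompl q (p ⊓ w) where
  disjoint := disjoint_assoc.1 (inf_comm p q ▸ hw.disjoint)
  codisjoint := hpq.symm.inf_right (hw.codisjoint.mono_left inf_le_right)

theorem disjoint_iff_isGLB_bot {α : Type*} [PartialOrder α] [OrderBot α] {x y : α} :
    Disjoint x y ↔ IsGLB {x, y} ⊥ := by
  simp [IsGLB, IsGreatest, upperBounds, Disjoint]

section

variable {A : Type*} [SemilatticeSup A] {a b c m x y : A}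

theorem isGLB_image_coe_Ici_iff {s : Set (Set.Ici c)} {z : Set.Ici c} :
    IsGLB ((↑) '' s : Set A) z ↔ IsGLB s z := by
  refine ⟨IsGLB.of_image Subtype.coe_le_coe, fun h => ⟨?_, fun l hl => ?_⟩⟩
  · exact (Subtype.mono_coe _).mem_lowerBounds_image h.1
  · have hlc : ⟨l ⊔ c, le_sup_right⟩ ∈ lowerBounds s := fun x hx =>
      sup_le (hl (Set.mem_image_of_mem _ hx)) x.2
    exact le_sup_left.trans (h.2 hlc)

theorem isGLB_pair_coe_Ici_iff {x y z : Set.Ici c} :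
    IsGLB {(x : A), (y : A)} (z : A) ↔ IsGLB {x, y} z := by
  rw [← Set.image_pair, isGLB_image_coe_Ici_iff]

theorem disjoint_Ici_iff_isGLB {x y : Set.Ici c} :
    Disjoint x y ↔ IsGLB {(x : A), (y : A)} c :=
  disjoint_iff_isGLB_bot.trans isGLB_pair_coe_Ici_iff.symm

theorem isCompl_Ici_iff_isGLB [OrderTop A] {x y : Set.Ici c} :
    IsCompl x y ↔ IsGLB {(x : A), (y : A)} c ∧ (x : A) ⊔ y = ⊤ := by
  rw [isCompl_iff, disjoint_Ici_iff_isGLB, Set.Ici.codisjoint_iff, codisjoint_iff]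

theorem HasPartialMeets.exists_isGLB_Ici (hm : HasPartialMeets A) (x y : Set.Ici c) :
    ∃ z, IsGLB {x, y} z := by
  obtain ⟨z, hz⟩ := hm x y ⟨c, x.2, y.2⟩
  have hcz : c ≤ z := hz.2 (by simpa using ⟨x.2, y.2⟩)
  exact ⟨⟨z, hcz⟩, isGLB_pair_coe_Ici_iff.1 hz⟩

/-- The principal upset `[c)` of a join-semilattice with partial meets as a lattice. It extends the
order and joins which `[c)` inherits from `A`; the meets are chosen by `Exists.choose`. -/
noncomputable abbrev HasPartialMeets.latticeIci (hm : HasPartialMeets A) (c : A) :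
    Lattice (Set.Ici c) where
  __ := (inferInstance : SemilatticeSup (Set.Ici c))
  __ := SemilatticeInf.ofIsGLB (fun x y => (hm.exists_isGLB_Ici x y).choose)
    fun x y => (hm.exists_isGLB_Ici x y).choose_spec

/-- The principal upset `[c)` of a distributive nearlattice as a distributive lattice, refining
`HasPartialMeets.latticeIci`. -/
noncomputable abbrev UpsetDistrib.distribLatticeIci (hd : UpsetDistrib A)
    (hm : HasPartialMeets A) (c : A) : DistribLattice (Set.Ici c) :=
  letI := hm.latticeIci c
  have isGLB_coe_inf (x y : Set.Ici c) : IsGLB {(x : A), (y : A)} (x ⊓ y : Set.Ici c) :=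
    isGLB_pair_coe_Ici_iff.2 isGLB_pair
  DistribLattice.ofInfSupLe fun x y z =>
    (hd c x y z _ _ _ x.2 y.2 z.2 (isGLB_coe_inf x (y ⊔ z)) (isGLB_coe_inf x y)
      (isGLB_coe_inf x z)).le

theorem UpsetDistrib.isGLB_sup_left (hd : UpsetDistrib A) (hm : HasPartialMeets A)
    (h : IsGLB {x, y} m) (c : A) : IsGLB {c ⊔ x, c ⊔ y} (c ⊔ m) := by
  let := hd.distribLatticeIci hm m
  have hmx : m ≤ x := h.1 (by simp)
  have hmy : m ≤ y := h.1 (by simp)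
  let x' : Set.Ici m := ⟨x, hmx⟩
  let y' : Set.Ici m := ⟨y, hmy⟩
  let c' : Set.Ici m := ⟨c ⊔ m, le_sup_right⟩
  have hinf : x' ⊓ y' = ⊥ := disjoint_iff.1 (disjoint_Ici_iff_isGLB.2 h)
  have hc' : IsGLB {c' ⊔ x', c' ⊔ y'} c' := by
    simpa only [← sup_inf_left, hinf, sup_bot_eq] using
      isGLB_pair (a := c' ⊔ x') (b := c' ⊔ y')
  have hA : IsGLB {c ⊔ m ⊔ x, c ⊔ m ⊔ y} (c ⊔ m) := isGLB_pair_coe_Ici_iff.2 hc'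
  rwa [sup_assoc, sup_assoc, sup_eq_right.2 hmx, sup_eq_right.2 hmy] at hA

/-- The join `c ⊔ x` as an element of the principal upset `[c)`. The complements of these
elements in the lattices `[c)` detect whether `x` is complemented. -/
def supIci (c x : A) : Set.Ici c := ⟨c ⊔ x, le_sup_left⟩

theorem coe_supIci (c x : A) : (supIci c x : A) = c ⊔ x := rfl

variable [OrderTop A]

theorem codisjoint_supIci (h : x ⊔ y = ⊤) (c : A) : Codisjoint (supIci c x) (supIci c y) := by
  rw [Set.Ici.codisjoint_iff, codisjoint_iff, coe_supIci, coe_supIci,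
    ← sup_sup_distrib_left, h, sup_top_eq]

theorem complElt_of_forall_exists_isCompl_supIci
    (h : ∀ c, ∃ w : Set.Ici c, IsCompl (supIci c a) w) : ComplElt a := by
  intro c
  obtain ⟨w, hw⟩ := h c
  obtain ⟨hglb, htop⟩ := isCompl_Ici_iff_isGLB.1 hw
  have haw : a ⊔ w = ⊤ :=
    calc a ⊔ w = a ⊔ (c ⊔ w) := by rw [sup_eq_right.2 w.2]
      _ = ⊤ := by rw [← sup_assoc, sup_comm a, ← coe_supIci c a, htop]
  exact ⟨c ⊔ a, w, c, le_sup_right, haw, hglb, le_rfl⟩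

theorem ComplElt.exists_isCompl_supIci (ha : ComplElt a) (hm : HasPartialMeets A)
    (hd : UpsetDistrib A) (c : A) : ∃ w : Set.Ici c, IsCompl (supIci c a) w := by
  obtain ⟨u, v, m, hau, hav, hglb, hmc⟩ := ha c
  have hdisj : Disjoint (supIci c u) (supIci c v) := by
    rw [disjoint_Ici_iff_isGLB]
    simpa only [coe_supIci, sup_eq_left.2 hmc] using hd.isGLB_sup_left hm hglb c
  have hle : supIci c a ≤ supIci c u := sup_le_sup_left hau c
  exact ⟨supIci c v, hdisj.mono_left hle, codisjoint_supIci hav c⟩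

theorem ComplElt.of_isGLB_of_sup_eq_top (ha : ComplElt a) (hm : HasPartialMeets A)
    (hd : UpsetDistrib A) (hglb : IsGLB {b, y} a) (htop : b ⊔ y = ⊤) : ComplElt y := by
  refine complElt_of_forall_exists_isCompl_supIci fun c => ?_
  let := hd.distribLatticeIci hm c
  obtain ⟨w, hw⟩ := ha.exists_isCompl_supIci hm hd c
  have hinf : supIci c b ⊓ supIci c y = supIci c a :=
    isGLB_pair.unique (isGLB_pair_coe_Ici_iff.1 (hd.isGLB_sup_left hm hglb c))
  exact ⟨supIci c b ⊓ w, isCompl_inf_of_isCompl_inf (hinf ▸ hw) (codisjoint_supIci htop c)⟩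

end

/-- in a distributive nearlattice, for complemented `a ≤ b` there
is a complemented `y` with `a ≤ y`, `b ∨ y = 1` and `b ∧ y = a`; hence the
complemented elements form a semi-boolean algebra. -/
theorem complemented_elements_semi_boolean {A : Type*} [SemilatticeSup A]
    [OrderTop A] (hm : HasPartialMeets A) (hd : UpsetDistrib A)
    (a b : A) (ha : ComplElt a) (hb : ComplElt b) (hab : a ≤ b) :
    ∃ y : A, ComplElt y ∧ a ≤ y ∧ b ⊔ y = ⊤ ∧ IsGLB ({b, y} : Set A) a := by
  obtain ⟨y, hy⟩ := hb.exists_isCompl_supIci hm hd a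
  obtain ⟨hglb, htop⟩ : IsGLB {b, (y : A)} a ∧ b ⊔ y = ⊤ := by
    simpa only [coe_supIci, sup_eq_right.2 hab] using isCompl_Ici_iff_isGLB.1 hy
  exact ⟨y, ha.of_isGLB_of_sup_eq_top hm hd hglb htop, y.2, htop, hglb⟩
end

section
/- Let A be a distributive nearlattice and a ∈ A. Then the following are equivalent: (1) for all x, y ∈ A such that x ∧ y exists in A, a = x ∧ y implies a = x or a = y; (2) for all x, y ∈ A such that x ∧ y exists in A, x ∧ y ≤ a implies x ≤ a or y ≤ a. -/
/-!
If `m = x ∧ y` lies below `a`, then in the distributive lattice `[m)` joining with `a` preserves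
this meet: `(a ∨ x) ∧ (a ∨ y) = a ∨ m = a`. Irreducibility of `a` thus gives `a = a ∨ x` or
`a = a ∨ y`.
-/

/-- Meet-irreducibility in an order where meets need not exist. Unlike for `InfIrred`, a maximal
element is allowed. -/
def IsMeetIrred {A : Type*} [Preorder A] (a : A) : Prop :=
  ∀ x y : A, IsGLB {x, y} a → a = x ∨ a = y

/-- Meet-primality in an order where meets need not exist: only existing meets are tested. Unlike
for `InfPrime`, a maximal element is allowed. -/
def IsMeetPrime {A : Type*} [Preorder A] (a : A) : Prop :=
  ∀ x y m : A, IsGLB {x, y} m → m ≤ a → x ≤ a ∨ y ≤ a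

section Order

variable {A : Type*}

theorem le_left_of_isGLB_pair [Preorder A] {x y m : A} (hm : IsGLB {x, y} m) : m ≤ x :=
  hm.1 (Set.mem_insert x {y})

theorem le_right_of_isGLB_pair [Preorder A] {x y m : A} (hm : IsGLB {x, y} m) : m ≤ y :=
  hm.1 (Set.mem_insert_of_mem x rfl)

theorem isGLB_pair_right_of_le [Preorder A] {x y : A} (h : y ≤ x) : IsGLB {x, y} y :=
  IsLeast.isGLB ⟨Set.mem_insert_of_mem x rfl, by simpa [lowerBounds_insert] using h⟩

theorem IsMeetPrime.isMeetIrred [PartialOrder A] {a : A} (ha : IsMeetPrime a) :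
    IsMeetIrred a := fun x y hxy =>
  (ha x y a hxy le_rfl).imp (le_left_of_isGLB_pair hxy).antisymm
    (le_right_of_isGLB_pair hxy).antisymm

end Order

section Nearlattice

variable {A : Type*} [SemilatticeSup A] {a c x y m : A}

theorem UpsetDistrib.isGLB_sup_sup (hd : UpsetDistrib A) (hmeet : HasPartialMeets A)
    (hca : c ≤ a) (hcm : c ≤ m) (hm : IsGLB {x, y} m) : IsGLB {a ⊔ x, a ⊔ y} (a ⊔ m) := by
  have hcx : c ≤ x := hcm.trans (le_left_of_isGLB_pair hm)
  have hcy : c ≤ y := hcm.trans (le_right_of_isGLB_pair hm)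
  have hcax : c ≤ a ⊔ x := le_sup_of_le_left hca
  obtain ⟨n, hn⟩ := hmeet (a ⊔ x) (a ⊔ y) ⟨a, le_sup_left, le_sup_left⟩
  obtain ⟨p, hp⟩ := hmeet (a ⊔ x) y ⟨c, hcax, hcy⟩
  obtain ⟨r, hr⟩ := hmeet y a ⟨c, hcy, hca⟩
  have hn_eq : n = a ⊔ p :=
    hd c (a ⊔ x) a y n a p hcax hca hcy hn (isGLB_pair_right_of_le le_sup_left) hp
  have hp_eq : p = r ⊔ m :=
    hd c y a x p r m hcy hca hcx (by rwa [Set.pair_comm]) hr (by rwa [Set.pair_comm])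
  have hn_eq_sup : n = a ⊔ m := calc
    n = a ⊔ (r ⊔ m) := by rw [hn_eq, hp_eq]
    _ = a ⊔ m := by rw [← sup_assoc, sup_eq_left.2 (le_right_of_isGLB_pair hr)]
  rwa [← hn_eq_sup]

theorem IsMeetIrred.isMeetPrime (ha : IsMeetIrred a) (hmeet : HasPartialMeets A)
    (hd : UpsetDistrib A) : IsMeetPrime a := by
  intro x y m hm hma
  have hglb : IsGLB {a ⊔ x, a ⊔ y} a := by
    simpa only [sup_eq_left.2 hma] using hd.isGLB_sup_sup hmeet hma le_rfl hm
  exact (ha _ _ hglb).imp left_eq_sup.1 left_eq_sup.1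

theorem nearlattice_irreducible_iff_prime_general (hmeet : HasPartialMeets A) (hd : UpsetDistrib A)
    (a : A) : IsMeetIrred a ↔ IsMeetPrime a :=
  ⟨fun ha => ha.isMeetPrime hmeet hd, IsMeetPrime.isMeetIrred⟩

end Nearlattice

/-- in a distributive nearlattice, `a` is meet-irreducible
(`a = x ∧ y` implies `a = x` or `a = y`, for existing meets) iff it is
meet-prime (`x ∧ y ≤ a` implies `x ≤ a` or `y ≤ a`, for existing meets). -/
theorem nearlattice_irreducible_iff_prime {A : Type*} [SemilatticeSup A] [OrderTop A]
    (hm : HasPartialMeets A) (hd : UpsetDistrib A) (a : A) :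
    (∀ x y m : A, IsGLB ({x, y} : Set A) m → a = m → a = x ∨ a = y) ↔
      (∀ x y m : A, IsGLB ({x, y} : Set A) m → m ≤ a → x ≤ a ∨ y ≤ a) :=
  have hiff := nearlattice_irreducible_iff_prime_general hm hd a
  ⟨fun h => hiff.1 fun x y hxy => h x y a hxy rfl, fun h x y _ hxy e => hiff.2 h x y (e ▸ hxy)⟩
end

section
/- Let A be a finite distributive nearlattice, L a bounded distributive lattice, and e : A → L an injective N-homomorphism such that e[A] is finitely meet-dense in L. Then e[Irr(A)] = Irr(L), where Irr(L) is the set of meet-irreducible elements of L, i.e., elements u ≠ 1_L such that u = v ∧ w implies u = v or u = w. -/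
/-- A meet-irreducible element of a nearlattice. -/
def IrrElt {A : Type*} [SemilatticeSup A] [OrderTop A] (a : A) : Prop :=
  a ≠ ⊤ ∧ ∀ x y m : A, IsGLB ({x, y} : Set A) m → a = m → a = x ∨ a = y

/-!
An irreducible `a` of the nearlattice is not the meet of finitely many elements strictly above it:
such a meet exists because `a` is a common lower bound, and by induction it stays strictly above
`a`. Hence whenever `e a` is a finite meet of elements of the image, `a` is one of them. If now
`e a = v ⊓ w`, write `v` and `w` as finite meets of the image: `a` occurs in one of the two, and
that factor equals `e a`. Conversely an irreducible of `L`, being a finite meet of elements of the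
image, lies in the image.
-/

theorem map_le_map_iff_of_injective_of_map_sup {A L : Type*} [SemilatticeSup A] [SemilatticeSup L]
    {e : A → L} (hinj : Function.Injective e) (hsup : ∀ a b : A, e (a ⊔ b) = e a ⊔ e b)
    {a b : A} : e a ≤ e b ↔ a ≤ b := by
  rw [← sup_eq_right, ← hsup, hinj.eq_iff, sup_eq_right]

theorem infIrred_iff_ne_top_and_forall {L : Type*} [SemilatticeInf L] [OrderTop L] {u : L} :
    InfIrred u ↔ u ≠ ⊤ ∧ ∀ v w : L, u = v ⊓ w → u = v ∨ u = w := by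
  simp only [InfIrred, isMax_iff_eq_top, ne_eq, @eq_comm L u]

namespace IrrElt

variable {A L : Type*} [SemilatticeSup A] [OrderTop A] {a : A}

theorem lt_of_isGLB (ha : IrrElt a) {x y m : A} (hx : a < x) (hy : a < y)
    (hm : IsGLB {x, y} m) : a < m := by
  have ham : a ≤ m := (le_isGLB_iff hm).2 (by simp [lowerBounds_insert, hx.le, hy.le])
  refine ham.lt_of_ne fun h => ?_
  exact (ha.2 x y m hm h).elim hx.ne hy.ne

variable [SemilatticeInf L] [OrderTop L]

theorem exists_lt_and_map_eq_finset_inf (ha : IrrElt a) (hmeet : HasPartialMeets A)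
    {e : A → L} (htop : e ⊤ = ⊤) (hinf : ∀ a b m : A, IsGLB {a, b} m → e m = e a ⊓ e b)
    (s : Finset A) (hs : ∀ x ∈ s, a < x) : ∃ m, a < m ∧ e m = s.inf e := by
  induction s using Finset.cons_induction with
  | empty => exact ⟨⊤, ha.1.lt_top, htop⟩
  | cons x s hx ih =>
    rw [Finset.forall_mem_cons] at hs
    obtain ⟨hax, hs⟩ := hs
    obtain ⟨n, han, hn⟩ := ih hs
    obtain ⟨m, hm⟩ := hmeet x n ⟨a, hax.le, han.le⟩
    exact ⟨m, ha.lt_of_isGLB hax han hm, by rw [Finset.inf_cons, hinf x n m hm, hn]⟩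

theorem mem_of_map_eq_finset_inf (ha : IrrElt a) (hmeet : HasPartialMeets A)
    {e : A ↪o L} (htop : e ⊤ = ⊤) (hinf : ∀ a b m : A, IsGLB {a, b} m → e m = e a ⊓ e b)
    {s : Finset A} (hs : e a = s.inf e) : a ∈ s := by
  by_contra has
  have hlt : ∀ x ∈ s, a < x := fun x hx =>
    (e.le_iff_le.1 (hs.trans_le (Finset.inf_le hx))).lt_of_ne fun h => has (h ▸ hx)
  obtain ⟨m, ham, hm⟩ := ha.exists_lt_and_map_eq_finset_inf hmeet htop hinf s hlt
  exact ham.ne (e.injective (hs.trans hm.symm))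

theorem infIrred_map (ha : IrrElt a) (hmeet : HasPartialMeets A)
    {e : A ↪o L} (htop : e ⊤ = ⊤) (hinf : ∀ a b m : A, IsGLB {a, b} m → e m = e a ⊓ e b)
    (hdense : ∀ u : L, ∃ s : Finset A, u = s.inf e) : InfIrred (e a) := by
  classical
  refine infIrred_iff_ne_top_and_forall.2
    ⟨fun h => ha.1 (e.injective (h.trans htop.symm)), fun v w hvw => ?_⟩
  obtain ⟨s, rfl⟩ := hdense v
  obtain ⟨t, rfl⟩ := hdense w
  have hmem : a ∈ s ∪ t :=
    ha.mem_of_map_eq_finset_inf hmeet htop hinf (hvw.trans Finset.inf_union.symm)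
  exact (Finset.mem_union.1 hmem).imp
    (fun has => (hvw.trans_le inf_le_left).antisymm (Finset.inf_le has))
    (fun hat => (hvw.trans_le inf_le_right).antisymm (Finset.inf_le hat))

theorem of_infIrred_map {e : A → L} (hinj : Function.Injective e) (htop : e ⊤ = ⊤)
    (hinf : ∀ a b m : A, IsGLB {a, b} m → e m = e a ⊓ e b) (ha : InfIrred (e a)) :
    IrrElt a := by
  refine ⟨fun h => ha.ne_top (h ▸ htop), ?_⟩
  rintro x y _ hm rfl
  exact (ha.2 (hinf x y a hm).symm).imp (fun h => hinj h.symm) (fun h => hinj h.symm)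

end IrrElt

theorem free_extension_irreducibles_general {A L : Type*}
    [SemilatticeSup A] [OrderTop A] [SemilatticeInf L] [OrderTop L]
    (hmeet : HasPartialMeets A) (e : A ↪o L) (htop : e ⊤ = ⊤)
    (hinf : ∀ a b m : A, IsGLB {a, b} m → e m = e a ⊓ e b)
    (hdense : ∀ u : L, ∃ s : Finset A, u = s.inf e) :
    e '' {a : A | IrrElt a} =
      {u : L | u ≠ ⊤ ∧ ∀ v w : L, u = v ⊓ w → u = v ∨ u = w} := by
  ext u
  rw [Set.mem_ofPred_eq, ← infIrred_iff_ne_top_and_forall]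
  constructor
  · rintro ⟨a, ha, rfl⟩
    exact ha.infIrred_map hmeet htop hinf hdense
  · intro hu
    obtain ⟨s, hs⟩ := hdense u
    obtain ⟨a, -, rfl⟩ := hu.finset_inf_eq hs.symm
    exact ⟨a, .of_infIrred_map e.injective htop hinf hu, rfl⟩

/-- for a finite distributive nearlattice `A` embedded (via an
injective, finitely meet-dense N-homomorphism `e`) in a bounded distributive
lattice `L`, `e` maps the meet-irreducible elements of `A` onto the
meet-irreducible elements of `L`. -/
theorem free_extension_irreducibles {A L : Type*}
    [SemilatticeSup A] [OrderTop A] [Finite A] [DistribLattice L] [BoundedOrder L]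
    (hm : HasPartialMeets A) (hd : UpsetDistrib A)
    (e : A → L) (hinj : Function.Injective e)
    (htop : e ⊤ = ⊤)
    (hsup : ∀ a b : A, e (a ⊔ b) = e a ⊔ e b)
    (hinf : ∀ a b m : A, IsGLB ({a, b} : Set A) m → e m = e a ⊓ e b)
    (hdense : ∀ u : L, ∃ s : Finset A, s.Nonempty ∧ u = s.inf e) :
    e '' {a : A | IrrElt a} =
      {u : L | u ≠ ⊤ ∧ ∀ v w : L, u = v ⊓ w → u = v ∨ u = w} := by
  exact free_extension_irreducibles_general hm
    (.ofMapLEIff e fun _ _ => map_le_map_iff_of_injective_of_map_sup hinj hsup) htop hinf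
    fun u => (hdense u).imp fun _ => And.right
end
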